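/- Let a and b be positive integers with b > a and let n ≥ 2(a+b+2)(b+2). If G belongs to 𝒢_n^{a,b}, then ρ(G) ≤ ρ(H_n^{a,b}), with equality if and only if G is isomorphic to H_n^{a,b}. -/

import Mathlib

open Finset Matrix

namespace SimpleGraph

variable {V : Type*} [Fintype V] [DecidableEq V]

lemma isHermitian_adjMatrix' (G : SimpleGraph V) [DecidableRel G.Adj] :
    (G.adjMatrix ℝ).IsHermitian := by
  rw [Matrix.IsHermitian, conjTranspose_eq_transpose_of_trivial, isSymm_adjMatrix]

/-- The spectral radius (largest adjacency eigenvalue) of a finite simple graph. -/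
noncomputable def spectralRadius (G : SimpleGraph V) : ℝ :=
  letI := Classical.decRel G.Adj
  ⨆ i, (isHermitian_adjMatrix' G).eigenvalues i

/-- `G` has an `[a,b]`-factor: a spanning subgraph all of whose degrees lie in `[a,b]`. -/
def HasABFactor (G : SimpleGraph V) (a b : ℕ) : Prop :=
  ∃ H : SimpleGraph V, H ≤ G ∧ ∀ v : V,
    letI := Classical.decRel H.Adj
    a ≤ H.degree v ∧ H.degree v ≤ b

/-- `G` has a fractional `[a,b]`-factor: a weighting of the edges by values in `[0,1]`
such that the total weight at every vertex lies in `[a,b]`. -/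
def HasFractionalABFactor (G : SimpleGraph V) (a b : ℕ) : Prop :=
  letI := Classical.decRel G.Adj
  ∃ h : Sym2 V → ℝ, (∀ e ∈ G.edgeSet, 0 ≤ h e ∧ h e ≤ 1) ∧
    ∀ v : V, (a : ℝ) ≤ ∑ e ∈ G.incidenceFinset v, h e ∧
      ∑ e ∈ G.incidenceFinset v, h e ≤ (b : ℝ)

end SimpleGraph

/-- `K_a ∨ (K_{n-a-b-1} ∪ (b+1)K_1)`, with vertices `0,…,a-1` forming the `K_a`,
vertices `a,…,n-b-2` forming the `K_{n-a-b-1}`, and the last `b+1` vertices independent. -/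
def baseGraph (n a b : ℕ) : SimpleGraph (Fin n) :=
  SimpleGraph.fromRel (fun i j => (i : ℕ) < a ∨ ((i : ℕ) < n - b - 1 ∧ (j : ℕ) < n - b - 1))

/-- The graph `H_n^{a,b}`: `baseGraph n a b` together with `a-1` extra edges joining the
vertex `n-b-1` (a fixed vertex of the independent part `(b+1)K_1`) to the `a-1`
vertices `a,…,2a-2` of the `K_{n-a-b-1}` part. -/
def Hgraph (n a b : ℕ) : SimpleGraph (Fin n) :=
  SimpleGraph.fromRel (fun i j => (i : ℕ) < a ∨ ((i : ℕ) < n - b - 1 ∧ (j : ℕ) < n - b - 1) ∨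
    ((i : ℕ) = n - b - 1 ∧ a ≤ (j : ℕ) ∧ (j : ℕ) < 2 * a - 1))

/-- The family `𝒢_n^{a,b}`: graphs obtained from `baseGraph n a b` by adding `a-1` edges
between the clique part `{a,…,n-b-2}` and the independent part `{n-b-1,…,n-1}`. -/
def GFamily (n a b : ℕ) (G : SimpleGraph (Fin n)) : Prop :=
  ∃ F : Finset (Fin n × Fin n), F.card = a - 1 ∧
    (∀ p ∈ F, a ≤ (p.1 : ℕ) ∧ (p.1 : ℕ) < n - b - 1 ∧ n - b - 1 ≤ (p.2 : ℕ)) ∧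
    G = baseGraph n a b ⊔ SimpleGraph.fromEdgeSet ((fun p : Fin n × Fin n => s(p.1, p.2)) '' F)

/-!
Every graph in `𝒢_n^{a,b}` is a split graph whose clique `T` consists of the first `n - b - 1`
vertices. Let `x` be a nonnegative eigenvector of `G` for `ρ = ρ(G)`, let `H` be another split graph
on `T`, and let `z` agree with `x` on `T` and satisfy the eigenvalue equations of `H` for `ρ` off
`T`. Then `zᵀ A(H) z - ρ zᵀ z` exceeds the corresponding quantity for `G`, which is zero, by `ρ⁻¹`
times the increase of `∑ v ∉ T, (∑ i ∈ T, i ~ v, x i) ^ 2`, so `ρ(G) < ρ(H)` as soon as this sum of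
squares increases. The values of `x` on `T` differ by `O(ρ⁻²)` relative to their size because
`ρ ≥ |T| - 1`. Hence, for large `n`, moving all the added edges to one vertex outside `T` does
increase the sum of squares, unless they already share such an endpoint; in that case `G ≅ H`.
-/

open SimpleGraph

section SpectralRadius

variable {V : Type*} [Fintype V]

lemma dotProduct_adjMatrix_mulVec_le_abs (G : SimpleGraph V) [DecidableRel G.Adj]
    (x : V → ℝ) :
    x ⬝ᵥ (G.adjMatrix ℝ *ᵥ x) ≤ |x| ⬝ᵥ (G.adjMatrix ℝ *ᵥ |x|) := by
  simp only [dotProduct_mulVec_adjMatrix, Pi.abs_apply, ← abs_mul]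
  gcongr with i _ j _
  split_ifs
  exacts [le_abs_self _, le_rfl]

variable [DecidableEq V]

lemma spectralRadius_eq_sSup_spectrum (G : SimpleGraph V) [DecidableRel G.Adj] :
    G.spectralRadius = sSup (spectrum ℝ (G.adjMatrix ℝ)) := by
  rw [(isHermitian_adjMatrix' G).spectrum_real_eq_range_eigenvalues, sSup_range,
    SimpleGraph.spectralRadius]
  congr!

lemma spectralRadius_congr {W : Type*} [Fintype W] [DecidableEq W] {G : SimpleGraph V}
    {H : SimpleGraph W} (e : G ≃g H) :
    G.spectralRadius = H.spectralRadius := by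
  classical
  rw [spectralRadius_eq_sSup_spectrum, spectralRadius_eq_sSup_spectrum, ← e.reindex_adjMatrix ℝ,
    ← AlgEquiv.spectrum_eq (reindexAlgEquiv ℝ ℝ e.toEquiv) (G.adjMatrix ℝ)]
  rfl

variable (G : SimpleGraph V) [DecidableRel G.Adj]

open scoped MatrixOrder in
lemma posSemidef_spectralRadius_smul_one_sub_adjMatrix :
    (G.spectralRadius • (1 : Matrix V V ℝ) - G.adjMatrix ℝ).PosSemidef := by
  have spectrum_le : ∀ μ ∈ spectrum ℝ (G.adjMatrix ℝ), μ ≤ G.spectralRadius := fun μ hμ => by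
    rw [spectralRadius_eq_sSup_spectrum]
    exact le_csSup (Matrix.finite_real_spectrum).bddAbove hμ
  rw [← Matrix.le_iff, ← Algebra.algebraMap_eq_smul_one]
  exact le_algebraMap_of_spectrum_le spectrum_le (isHermitian_adjMatrix' G)

lemma dotProduct_spectralRadius_smul_one_sub_adjMatrix_mulVec (x : V → ℝ) :
    x ⬝ᵥ ((G.spectralRadius • (1 : Matrix V V ℝ) - G.adjMatrix ℝ) *ᵥ x) =
      G.spectralRadius * (x ⬝ᵥ x) - x ⬝ᵥ (G.adjMatrix ℝ *ᵥ x) := by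
  rw [sub_mulVec, smul_mulVec, one_mulVec, dotProduct_sub, dotProduct_smul, smul_eq_mul]

lemma dotProduct_adjMatrix_mulVec_le (x : V → ℝ) :
    x ⬝ᵥ (G.adjMatrix ℝ *ᵥ x) ≤ G.spectralRadius * (x ⬝ᵥ x) := by
  have h := (posSemidef_spectralRadius_smul_one_sub_adjMatrix G).dotProduct_mulVec_nonneg x
  rw [star_trivial, dotProduct_spectralRadius_smul_one_sub_adjMatrix_mulVec] at h
  linarith

lemma adjMatrix_mulVec_eq_of_le_dotProduct {x : V → ℝ}
    (hx : G.spectralRadius * (x ⬝ᵥ x) ≤ x ⬝ᵥ (G.adjMatrix ℝ *ᵥ x)) :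
    G.adjMatrix ℝ *ᵥ x = G.spectralRadius • x := by
  have h := (posSemidef_spectralRadius_smul_one_sub_adjMatrix G).dotProduct_mulVec_zero_iff x
  rw [star_trivial, dotProduct_spectralRadius_smul_one_sub_adjMatrix_mulVec, sub_mulVec,
    smul_mulVec, one_mulVec] at h
  exact (sub_eq_zero.1 (h.1 (by linarith [dotProduct_adjMatrix_mulVec_le G x]))).symm

lemma exists_adjMatrix_mulVec_eq_spectralRadius_smul [Nonempty V] :
    ∃ x : V → ℝ, x ≠ 0 ∧ G.adjMatrix ℝ *ᵥ x = G.spectralRadius • x := by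
  have hA := isHermitian_adjMatrix' G
  obtain ⟨i, hi⟩ := exists_eq_ciSup_of_finite (f := hA.eigenvalues)
  have hρ : hA.eigenvalues i = G.spectralRadius := by
    rw [hi, spectralRadius_eq_sSup_spectrum, hA.spectrum_real_eq_range_eigenvalues, sSup_range]
  refine ⟨hA.eigenvectorBasis i, fun h => ?_, by rw [hA.mulVec_eigenvectorBasis i, hρ]⟩
  exact hA.eigenvectorBasis.orthonormal.ne_zero i (PiLp.ext (congrFun h))

lemma exists_nonneg_adjMatrix_mulVec_eq_spectralRadius_smul [Nonempty V] :
    ∃ x : V → ℝ, x ≠ 0 ∧ 0 ≤ x ∧ G.adjMatrix ℝ *ᵥ x = G.spectralRadius • x := by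
  obtain ⟨x, hx0, hx⟩ := exists_adjMatrix_mulVec_eq_spectralRadius_smul G
  refine ⟨|x|, by simpa [funext_iff] using hx0, abs_nonneg x,
    adjMatrix_mulVec_eq_of_le_dotProduct G ?_⟩
  calc G.spectralRadius * (|x| ⬝ᵥ |x|)
      = x ⬝ᵥ (G.adjMatrix ℝ *ᵥ x) := by
        rw [hx, dotProduct_smul, smul_eq_mul]; simp [dotProduct]
    _ ≤ _ := dotProduct_adjMatrix_mulVec_le_abs G x

end SpectralRadius

section NbrSum

variable {V : Type*} (G : SimpleGraph V) [DecidableRel G.Adj]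

/-- The sum of the weights `x` over the neighbours of `v` that lie in `S`. -/
def nbrSum (S : Finset V) (x : V → ℝ) (v : V) : ℝ := ∑ i ∈ S with G.Adj v i, x i

variable {G} {S : Finset V} {x y : V → ℝ} {v : V}

lemma nbrSum_congr (h : ∀ i ∈ S, x i = y i) : nbrSum G S x v = nbrSum G S y v :=
  sum_congr rfl fun i hi => h i (mem_filter.1 hi).1

lemma nbrSum_nonneg (hx : 0 ≤ x) : 0 ≤ nbrSum G S x v :=
  sum_nonneg fun i _ => hx i

lemma nbrSum_le_sum (hx : 0 ≤ x) : nbrSum G S x v ≤ ∑ i ∈ S, x i :=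
  sum_le_sum_of_subset_of_nonneg (filter_subset _ _) fun i _ _ => hx i

lemma sum_mul_nbrSum_comm (S T : Finset V) (x : V → ℝ) :
    ∑ v ∈ S, x v * nbrSum G T x v = ∑ v ∈ T, x v * nbrSum G S x v := by
  simp only [nbrSum, mul_sum, sum_filter, mul_ite, mul_zero]
  rw [sum_comm]
  refine sum_congr rfl fun i _ => sum_congr rfl fun j _ => ?_
  simp only [G.adj_comm j i, mul_comm (x j)]

lemma nbrSum_eq_zero_of_isIndepSet (hS : G.IsIndepSet S) (hv : v ∈ S) :
    nbrSum G S x v = 0 :=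
  sum_eq_zero fun i hi => by
    rw [mem_filter] at hi
    exact absurd hi.2 (hS hv hi.1 hi.2.ne)

lemma nbrSum_eq_sum_sub_of_isClique (hS : G.IsClique S) (hv : v ∈ S) :
    nbrSum G S x v = ∑ i ∈ S, x i - x v := by
  classical
  have nbrs_eq_erase : ({i ∈ S | G.Adj v i} : Finset V) = S.erase v := by
    ext i
    rw [mem_filter, mem_erase]
    exact ⟨fun h => ⟨h.2.ne', h.1⟩, fun h => ⟨h.2, hS hv h.2 h.1.symm⟩⟩
  rw [nbrSum, nbrs_eq_erase, ← sum_erase_add S x hv, add_sub_cancel_right]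

variable [Fintype V] [DecidableEq V]

lemma adjMatrix_mulVec_apply_eq_nbrSum_add (S : Finset V) (x : V → ℝ) (v : V) :
    (G.adjMatrix ℝ *ᵥ x) v = nbrSum G S x v + nbrSum G Sᶜ x v := by
  simp only [adjMatrix_mulVec_apply, neighborFinset_eq_filter, sum_filter, nbrSum,
    sum_add_sum_compl]

lemma dotProduct_eq_sum_add_sum_compl (S : Finset V) (x y : V → ℝ) :
    x ⬝ᵥ y = ∑ v ∈ S, x v * y v + ∑ v ∈ Sᶜ, x v * y v :=
  (sum_add_sum_compl S _).symm

end NbrSum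

lemma card_sub_one_le_spectralRadius_of_isClique {V : Type*} [Fintype V] [DecidableEq V]
    {G : SimpleGraph V} {S : Finset V} (hS : G.IsClique S) (hcard : 0 < #S) :
    (#S : ℝ) - 1 ≤ G.spectralRadius := by
  classical
  let x : V → ℝ := fun v => if v ∈ S then 1 else 0
  have hx : ∀ v ∈ S, x v = 1 := fun v hv => if_pos hv
  have hx' : ∀ v ∈ Sᶜ, x v = 0 := fun v hv => if_neg (mem_compl.1 hv)
  have sum_x : ∑ v ∈ S, x v = #S := by simp [sum_congr rfl hx]
  have mulVec_x : ∀ v ∈ S, (G.adjMatrix ℝ *ᵥ x) v = #S - 1 := fun v hv => by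
    rw [adjMatrix_mulVec_apply_eq_nbrSum_add S, nbrSum_eq_sum_sub_of_isClique hS hv, sum_x, hx v hv,
      nbrSum_congr (y := 0) hx']
    simp [nbrSum]
  have dotProduct_x : ∀ y : V → ℝ, x ⬝ᵥ y = ∑ v ∈ S, y v := fun y => by simp [dotProduct, x]
  have rayleigh := dotProduct_adjMatrix_mulVec_le G x
  rw [dotProduct_x, dotProduct_x, sum_congr rfl mulVec_x, sum_x, sum_const, nsmul_eq_mul,
    mul_comm] at rayleigh
  exact le_of_mul_le_mul_right rayleigh (by exact_mod_cast hcard)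

lemma spectralRadius_pos_of_isClique {V : Type*} [Fintype V] [DecidableEq V]
    {G : SimpleGraph V} {S : Finset V} (hS : G.IsClique S) (hcard : 1 < #S) :
    0 < G.spectralRadius :=
  (sub_pos.2 (by exact_mod_cast hcard)).trans_le
    (card_sub_one_le_spectralRadius_of_isClique hS (zero_lt_one.trans hcard))

section Split

variable {V : Type*}

/-- `G` is a split graph with clique part `T`: the vertices of `T` are pairwise adjacent and the
remaining ones pairwise non-adjacent. -/
structure IsSplitOn (G : SimpleGraph V) (T : Finset V) : Prop where
  isClique : G.IsClique T
  isIndepSet : G.IsIndepSet (T : Set V)ᶜ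

variable [Fintype V] [DecidableEq V] {G H : SimpleGraph V} [DecidableRel G.Adj]
  [DecidableRel H.Adj] {T : Finset V}

namespace IsSplitOn

lemma mulVec_apply_of_mem_compl (hG : IsSplitOn G T) (x : V → ℝ) {v : V} (hv : v ∈ Tᶜ) :
    (G.adjMatrix ℝ *ᵥ x) v = nbrSum G T x v := by
  have hI : G.IsIndepSet (Tᶜ : Finset V) := by simpa using hG.isIndepSet
  rw [adjMatrix_mulVec_apply_eq_nbrSum_add T, nbrSum_eq_zero_of_isIndepSet hI hv, add_zero]

lemma mulVec_apply_of_mem (hG : IsSplitOn G T) (x : V → ℝ) {v : V} (hv : v ∈ T) :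
    (G.adjMatrix ℝ *ᵥ x) v = ∑ i ∈ T, x i - x v + nbrSum G Tᶜ x v := by
  rw [adjMatrix_mulVec_apply_eq_nbrSum_add T, nbrSum_eq_sum_sub_of_isClique hG.isClique hv]

lemma dotProduct_adjMatrix_mulVec (hG : IsSplitOn G T) (x : V → ℝ) :
    x ⬝ᵥ (G.adjMatrix ℝ *ᵥ x) =
      (∑ i ∈ T, x i) ^ 2 - ∑ i ∈ T, x i ^ 2 + 2 * ∑ v ∈ Tᶜ, x v * nbrSum G T x v := by
  rw [dotProduct_eq_sum_add_sum_compl T,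
    sum_congr rfl fun v hv => by rw [hG.mulVec_apply_of_mem x hv],
    sum_congr (s₁ := Tᶜ) rfl fun v hv => by rw [hG.mulVec_apply_of_mem_compl x hv]]
  simp only [mul_add, mul_sub, sum_add_distrib, sum_sub_distrib, ← sum_mul]
  rw [sum_mul_nbrSum_comm T Tᶜ]
  ring_nf

end IsSplitOn

/-- The vector that agrees with `x` on the clique part `T` and solves the eigenvalue equations of
`G` for `ρ` at the vertices outside `T`. -/
noncomputable def splitExtension (G : SimpleGraph V) [DecidableRel G.Adj] (T : Finset V) (ρ : ℝ)
    (x : V → ℝ) (v : V) : ℝ :=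
  if v ∈ T then x v else ρ⁻¹ * nbrSum G T x v

variable {ρ : ℝ} {x : V → ℝ}

lemma IsSplitOn.splitExtension_eq_self (hG : IsSplitOn G T) (hρ : ρ ≠ 0)
    (hx : G.adjMatrix ℝ *ᵥ x = ρ • x) : splitExtension G T ρ x = x := by
  ext v
  rw [splitExtension, ite_eq_left_iff]
  intro hv
  rw [← hG.mulVec_apply_of_mem_compl x (mem_compl.2 hv), hx, Pi.smul_apply, smul_eq_mul,
    inv_mul_cancel_left₀ hρ]

lemma IsSplitOn.dotProduct_mulVec_splitExtension_sub (hG : IsSplitOn G T) (hρ : ρ ≠ 0)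
    (x : V → ℝ) :
    splitExtension G T ρ x ⬝ᵥ (G.adjMatrix ℝ *ᵥ splitExtension G T ρ x) -
        ρ * (splitExtension G T ρ x ⬝ᵥ splitExtension G T ρ x) =
      (∑ i ∈ T, x i) ^ 2 - (1 + ρ) * ∑ i ∈ T, x i ^ 2 + ρ⁻¹ * ∑ v ∈ Tᶜ, nbrSum G T x v ^ 2 := by
  set z := splitExtension G T ρ x
  have hzT : ∀ i ∈ T, z i = x i := fun i hi => if_pos hi
  have hzTc : ∀ v ∈ Tᶜ, z v = ρ⁻¹ * nbrSum G T x v := fun v hv => if_neg (mem_compl.1 hv)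
  have sum_sq : ∑ i ∈ T, z i ^ 2 = ∑ i ∈ T, x i ^ 2 :=
    sum_congr rfl fun i hi => by rw [hzT i hi]
  have sum_mul_nbrSum : ∑ v ∈ Tᶜ, z v * nbrSum G T z v = ρ⁻¹ * ∑ v ∈ Tᶜ, nbrSum G T x v ^ 2 := by
    rw [mul_sum]
    refine sum_congr rfl fun v hv => ?_
    rw [hzTc v hv, nbrSum_congr hzT]
    ring
  have sum_mul_self : ρ * ∑ v ∈ Tᶜ, z v * z v = ρ⁻¹ * ∑ v ∈ Tᶜ, nbrSum G T x v ^ 2 := by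
    rw [mul_sum, mul_sum]
    refine sum_congr rfl fun v hv => ?_
    rw [hzTc v hv]
    field_simp
  rw [hG.dotProduct_adjMatrix_mulVec, dotProduct_eq_sum_add_sum_compl T, mul_add, sum_mul_nbrSum,
    sum_mul_self]
  simp only [← sq]
  rw [sum_congr rfl hzT, sum_sq]
  ring

theorem IsSplitOn.spectralRadius_lt_of_sum_sq_nbrSum_lt (hG : IsSplitOn G T) (hH : IsSplitOn H T)
    (hρ : 0 < G.spectralRadius) (hx : G.adjMatrix ℝ *ᵥ x = G.spectralRadius • x)
    (hlt : ∑ v ∈ Tᶜ, nbrSum G T x v ^ 2 < ∑ v ∈ Tᶜ, nbrSum H T x v ^ 2) :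
    G.spectralRadius < H.spectralRadius := by
  set ρ := G.spectralRadius
  set z := splitExtension H T ρ x
  have hG_form := hG.dotProduct_mulVec_splitExtension_sub hρ.ne' x
  rw [hG.splitExtension_eq_self hρ.ne' hx, hx, dotProduct_smul, smul_eq_mul, sub_self] at hG_form
  have hH_form := hH.dotProduct_mulVec_splitExtension_sub hρ.ne' x
  have h_inv := mul_lt_mul_of_pos_left hlt (inv_pos.2 hρ)
  have h_rayleigh : ρ * (z ⬝ᵥ z) < H.spectralRadius * (z ⬝ᵥ z) :=
    lt_of_lt_of_le (by linarith) (dotProduct_adjMatrix_mulVec_le H z)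
  exact lt_of_mul_lt_mul_right h_rayleigh (by simpa using dotProduct_star_self_nonneg z)

lemma IsSplitOn.add_one_mul_apply_of_mem (hG : IsSplitOn G T) (hx : G.adjMatrix ℝ *ᵥ x = ρ • x)
    {v : V} (hv : v ∈ T) : (ρ + 1) * x v = ∑ i ∈ T, x i + nbrSum G Tᶜ x v := by
  have h := hG.mulVec_apply_of_mem x hv
  rw [hx, Pi.smul_apply, smul_eq_mul] at h
  linarith

lemma IsSplitOn.mul_sum_compl (hG : IsSplitOn G T) (hx : G.adjMatrix ℝ *ᵥ x = ρ • x) :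
    ρ * ∑ v ∈ Tᶜ, x v = ∑ v ∈ Tᶜ, nbrSum G T x v := by
  rw [mul_sum]
  refine sum_congr rfl fun v hv => ?_
  rw [← hG.mulVec_apply_of_mem_compl x hv, hx, Pi.smul_apply, smul_eq_mul]

end Split

lemma IsSplitOn.sum_pos_of_nonneg {V : Type*} [Fintype V] {G : SimpleGraph V} [DecidableRel G.Adj]
    {T : Finset V} {ρ : ℝ} {x : V → ℝ} (hG : IsSplitOn G T) (hx : G.adjMatrix ℝ *ᵥ x = ρ • x)
    (hρ : ρ ≠ 0) (hx0 : x ≠ 0) (hx_nonneg : 0 ≤ x) : 0 < ∑ i ∈ T, x i := by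
  classical
  refine (sum_nonneg fun i _ => hx_nonneg i).lt_of_ne' fun h_sum => hx0 ?_
  have hT : ∀ i ∈ T, x i = 0 := (sum_eq_zero_iff_of_nonneg fun i _ => hx_nonneg i).1 h_sum
  rw [← hG.splitExtension_eq_self hρ hx]
  ext v
  rw [splitExtension, nbrSum_congr (y := 0) hT]
  split_ifs with hv
  · exact hT v hv
  · simp [nbrSum]

lemma IsSplitOn.exists_bounds_of_nonneg {V : Type*} [Fintype V] [DecidableEq V]
    {G : SimpleGraph V} [DecidableRel G.Adj] {T : Finset V} {ρ : ℝ} {x : V → ℝ} (hG : IsSplitOn G T)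
    (hx : G.adjMatrix ℝ *ᵥ x = ρ • x) (hρ : 0 < ρ) (hx0 : x ≠ 0) (hx_nonneg : 0 ≤ x) :
    ∃ m M : ℝ, 0 < m ∧ m ≤ M ∧ (∀ v ∈ T, m ≤ x v ∧ x v ≤ M) ∧
      ρ * (ρ + 1) * (M - m) = ∑ v ∈ Tᶜ, nbrSum G T x v := by
  have hS := hG.sum_pos_of_nonneg hx hρ.ne' hx0 hx_nonneg
  have hY : 0 ≤ ∑ v ∈ Tᶜ, x v := sum_nonneg fun v _ => hx_nonneg v
  refine ⟨(∑ i ∈ T, x i) / (ρ + 1), (∑ i ∈ T, x i + ∑ v ∈ Tᶜ, x v) / (ρ + 1), by positivity,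
    by gcongr; linarith, fun v hv => ?_, ?_⟩
  · have h := hG.add_one_mul_apply_of_mem hx hv
    have h_nonneg : 0 ≤ nbrSum G Tᶜ x v := nbrSum_nonneg hx_nonneg
    have h_le : nbrSum G Tᶜ x v ≤ _ := nbrSum_le_sum hx_nonneg
    rw [div_le_iff₀ (by positivity), le_div_iff₀ (by positivity)]
    constructor <;> linarith
  · rw [← hG.mul_sum_compl hx]
    field_simp
    ring

section JoinSplitGraph

variable {V : Type*}

/-- The graph `K_A ∨ (K_{T ∖ A} ∪ |V ∖ T| K₁)` with the pairs in `F` added as edges. It is meant for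
`A ⊆ T` and `F ⊆ (T ∖ A) × (V ∖ T)`, so that each pair has its clique endpoint first. -/
def joinSplitGraph (A T : Finset V) (F : Finset (V × V)) : SimpleGraph V :=
  SimpleGraph.fromRel fun i j => i ∈ A ∨ (i ∈ T ∧ j ∈ T) ∨ (i, j) ∈ F

lemma joinSplitGraph_adj {A T : Finset V} {F : Finset (V × V)} {i j : V} :
    (joinSplitGraph A T F).Adj i j ↔
      i ≠ j ∧ (i ∈ A ∨ j ∈ A ∨ (i ∈ T ∧ j ∈ T) ∨ (i, j) ∈ F ∨ (j, i) ∈ F) := by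
  rw [joinSplitGraph, SimpleGraph.fromRel_adj]
  tauto

lemma isSplitOn_joinSplitGraph {A T : Finset V} {F : Finset (V × V)} (hA : A ⊆ T)
    (hF : ∀ p ∈ F, p.1 ∈ T) : IsSplitOn (joinSplitGraph A T F) T where
  isClique i hi j hj hij := joinSplitGraph_adj.2 ⟨hij, Or.inr (Or.inr (Or.inl ⟨hi, hj⟩))⟩
  isIndepSet i hi j hj _ hij := by
    obtain ⟨-, h | h | h | h | h⟩ := joinSplitGraph_adj.1 hij
    exacts [hi (hA h), hj (hA h), hi h.1, hi (hF _ h), hj (hF _ h)]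

variable [DecidableEq V]

instance (A T : Finset V) (F : Finset (V × V)) : DecidableRel (joinSplitGraph A T F).Adj :=
  fun _ _ => decidable_of_iff' _ joinSplitGraph_adj

/-- The total weight `x` of the clique endpoints of the pairs in `F` ending at `v`. -/
def edgeSum (F : Finset (V × V)) (x : V → ℝ) (v : V) : ℝ := ∑ p ∈ F with p.2 = v, x p.1

variable {A S T U : Finset V} {F : Finset (V × V)} {x : V → ℝ} {v w : V} {M : ℝ}

lemma sum_edgeSum (hF : ∀ p ∈ F, p.2 ∈ S) : ∑ v ∈ S, edgeSum F x v = ∑ p ∈ F, x p.1 :=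
  sum_fiberwise_of_maps_to hF _

lemma sum_sq_edgeSum_product_singleton (hw : w ∈ S) :
    ∑ v ∈ S, edgeSum (U ×ˢ {w}) x v ^ 2 = (∑ i ∈ U, x i) ^ 2 := by
  have edgeSum_eq : ∀ v, edgeSum (U ×ˢ {w}) x v = if w = v then ∑ i ∈ U, x i else 0 := fun v => by
    rw [edgeSum, sum_filter, sum_product]
    simp only [sum_singleton, sum_ite_irrel, sum_const_zero]
  rw [sum_congr rfl fun v _ => by rw [edgeSum_eq v, ite_pow, zero_pow two_ne_zero],
    sum_ite_eq, if_pos hw]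

lemma edgeSum_le_of_exists_ne (hM : 0 ≤ M) (hx : ∀ p ∈ F, x p.1 ≤ M) (hv : ∃ p ∈ F, p.2 ≠ v) :
    edgeSum F x v ≤ (#F - 1) * M := by
  have card_lt : #{p ∈ F | p.2 = v} < #F := card_lt_card (filter_ssubset.2 hv)
  have card_le : (#{p ∈ F | p.2 = v} : ℝ) ≤ #F - 1 := by
    rw [le_sub_iff_add_le]
    exact_mod_cast card_lt
  calc edgeSum F x v ≤ #{p ∈ F | p.2 = v} • M :=
        sum_le_card_nsmul _ _ _ fun p hp => hx p (mem_filter.1 hp).1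
    _ ≤ (#F - 1) * M := by rw [nsmul_eq_mul]; gcongr

lemma sum_sq_edgeSum_le (hF : ∀ p ∈ F, p.2 ∈ S) (hM : 0 ≤ M) (hx_nonneg : 0 ≤ x)
    (hx : ∀ p ∈ F, x p.1 ≤ M) (hne : ∀ v ∈ S, ∃ p ∈ F, p.2 ≠ v) :
    ∑ v ∈ S, edgeSum F x v ^ 2 ≤ (#F - 1) * M * ∑ p ∈ F, x p.1 := by
  rw [← sum_edgeSum hF, mul_sum]
  refine sum_le_sum fun v hv => ?_
  rw [sq]
  exact mul_le_mul_of_nonneg_right (edgeSum_le_of_exists_ne hM hx (hne v hv))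
    (sum_nonneg fun p _ => hx_nonneg p.1)

variable [Fintype V]

lemma nbrSum_joinSplitGraph (hA : A ⊆ T) (hF : F ⊆ (T \ A) ×ˢ Tᶜ) (hv : v ∈ Tᶜ) :
    nbrSum (joinSplitGraph A T F) T x v = ∑ i ∈ A, x i + edgeSum F x v := by
  rw [mem_compl] at hv
  have nbrs_eq : ({i ∈ T | (joinSplitGraph A T F).Adj v i} : Finset V) =
      A ∪ ({p ∈ F | p.2 = v} : Finset (V × V)).image Prod.fst := by
    ext i
    simp only [mem_filter, joinSplitGraph_adj, mem_union, mem_image, Prod.exists]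
    grind
  have disjoint_A : Disjoint A (({p ∈ F | p.2 = v} : Finset (V × V)).image Prod.fst) := by
    rw [disjoint_right]
    grind
  rw [nbrSum, nbrs_eq, sum_union disjoint_A, sum_image, edgeSum]
  grind [Set.InjOn]

lemma sum_nbrSum_joinSplitGraph (hA : A ⊆ T) (hF : F ⊆ (T \ A) ×ˢ Tᶜ) :
    ∑ v ∈ Tᶜ, nbrSum (joinSplitGraph A T F) T x v = #Tᶜ * ∑ i ∈ A, x i + ∑ p ∈ F, x p.1 := by
  rw [sum_congr rfl fun v hv => nbrSum_joinSplitGraph hA hF hv, sum_add_distrib, sum_const,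
    nsmul_eq_mul, sum_edgeSum fun _ hp => (mem_product.1 (hF hp)).2]

lemma sum_sq_nbrSum_joinSplitGraph (hA : A ⊆ T) (hF : F ⊆ (T \ A) ×ˢ Tᶜ) :
    ∑ v ∈ Tᶜ, nbrSum (joinSplitGraph A T F) T x v ^ 2 =
      #Tᶜ * (∑ i ∈ A, x i) ^ 2 + 2 * (∑ i ∈ A, x i) * ∑ p ∈ F, x p.1 +
        ∑ v ∈ Tᶜ, edgeSum F x v ^ 2 := by
  rw [sum_congr rfl fun v hv => by rw [nbrSum_joinSplitGraph hA hF hv]]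
  simp only [add_sq, sum_add_distrib, sum_const, nsmul_eq_mul, ← mul_sum,
    sum_edgeSum fun _ hp => (mem_product.1 (hF hp)).2]

end JoinSplitGraph

section Estimates

lemma one_lt_of_lt_mul_pred {c t : ℕ} (h : c < t * (t - 1)) : 1 < t :=
  tsub_pos_iff_lt.1 (Nat.pos_of_mul_pos_left (Nat.zero_lt_of_lt h))

variable {α k m M : ℝ}

lemma mul_sub_lt_of_mul_sub_le {r c q : ℝ} (hM : 0 < M) (hm : m ≤ M) (hc : 0 ≤ c)
    (hr : r * (M - m) ≤ c * M) (hq : q * c < r) : q * (M - m) < M := by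
  by_contra! h
  have hmM : 0 < M - m := by
    refine (sub_nonneg.2 hm).lt_of_ne fun h0 => ?_
    rw [← h0, mul_zero] at h
    linarith
  have : c * M ≤ q * c * (M - m) := by nlinarith
  nlinarith

-- Up to the factor `k * M`, the gap between the two sides is at least `M - 2 * (α + k) * (M - m)`.
lemma two_mul_add_lt_two_mul_add_sq {s τ σ Q : ℝ} (hk : 1 ≤ k) (hm : 0 < m) (hmM : m ≤ M)
    (hs : 0 ≤ s) (hsM : s ≤ α * M) (hτ : τ ≤ k * M) (hσ : k * m ≤ σ) (hQ : Q ≤ (k - 1) * M * τ)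
    (hclose : 2 * (α + k) * (M - m) < M) : 2 * s * τ + Q < 2 * s * σ + σ ^ 2 := by
  have hM : 0 < M := hm.trans_le hmM
  have linear_loss : s * (τ - σ) ≤ α * M * (k * (M - m)) :=
    calc s * (τ - σ) ≤ s * (k * (M - m)) := by gcongr; linarith
      _ ≤ α * M * (k * (M - m)) := by
        have := sub_nonneg.2 hmM
        gcongr
  have Q_le : Q ≤ (k - 1) * M * (k * M) := hQ.trans (by have := sub_nonneg.2 hk; gcongr)
  have sq_ge : k ^ 2 * (M ^ 2 - 2 * M * (M - m)) ≤ σ ^ 2 :=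
    calc k ^ 2 * (M ^ 2 - 2 * M * (M - m)) ≤ (k * m) ^ 2 := by
          nlinarith [sq_nonneg (k * (M - m))]
      _ ≤ σ ^ 2 := by gcongr
  have gap_pos := mul_pos (mul_pos (one_pos.trans_le hk) hM) (sub_pos.2 hclose)
  linarith

end Estimates

section Extremality

variable {V : Type*}

lemma exists_perm_mem_iff {C U U' : Finset V} (hU : U ⊆ C) (hU' : U' ⊆ C) (hcard : #U = #U') :
    ∃ σ : Equiv.Perm V, (∀ v ∉ C, σ v = v) ∧ ∀ v, σ v ∈ U' ↔ v ∈ U := by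
  classical
  let e : {v : C // v.1 ∈ U} ≃ {v : C // v.1 ∈ U'} :=
    (Equiv.subtypeSubtypeEquivSubtype fun h => hU h).trans
      ((equivOfCardEq hcard).trans (Equiv.subtypeSubtypeEquivSubtype fun h => hU' h).symm)
  let τ : Equiv.Perm C := e.extendSubtype
  refine ⟨Equiv.Perm.ofSubtype τ, fun v hv => Equiv.Perm.ofSubtype_apply_of_not_mem τ hv,
    fun v => ?_⟩
  by_cases hv : v ∈ C
  · rw [Equiv.Perm.ofSubtype_apply_of_mem τ hv]
    by_cases hvU : v ∈ U
    · exact iff_of_true (Equiv.extendSubtype_mem e ⟨v, hv⟩ hvU) hvU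
    · exact iff_of_false (Equiv.extendSubtype_not_mem e ⟨v, hv⟩ hvU) hvU
  · rw [Equiv.Perm.ofSubtype_apply_of_not_mem τ hv]
    exact iff_of_false (fun h => hv (hU' h)) fun h => hv (hU h)

variable [DecidableEq V] {A T U U' : Finset V} {F : Finset (V × V)} {w w' : V}

lemma eq_image_fst_product_singleton_of_forall_snd_eq (hF : ∀ p ∈ F, p.2 = w) :
    F = F.image Prod.fst ×ˢ {w} := by
  grind

lemma card_image_fst_of_forall_snd_eq (hF : ∀ p ∈ F, p.2 = w) : #(F.image Prod.fst) = #F :=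
  card_image_of_injOn fun p hp q hq h => Prod.ext h ((hF p hp).trans (hF q hq).symm)

variable [Fintype V]

lemma exists_eigenvector_joinSplitGraph_nearly_constant (hA : A ⊆ T) (hF : F ⊆ (T \ A) ×ˢ Tᶜ)
    (hlarge : 2 * (#A + #F) * (#Tᶜ * #A + #F) < #T * (#T - 1)) :
    ∃ (x : V → ℝ) (m M : ℝ), 0 ≤ x ∧
      (joinSplitGraph A T F).adjMatrix ℝ *ᵥ x = (joinSplitGraph A T F).spectralRadius • x ∧
      0 < m ∧ m ≤ M ∧ (∀ v ∈ T, m ≤ x v ∧ x v ≤ M) ∧ 2 * (#A + #F) * (M - m) < M := by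
  have hFT : ∀ p ∈ F, p.1 ∈ T := by grind
  have hG := isSplitOn_joinSplitGraph hA hFT
  set ρ := (joinSplitGraph A T F).spectralRadius
  have hT : 1 < #T := one_lt_of_lt_mul_pred hlarge
  have hρ : (#T : ℝ) - 1 ≤ ρ := card_sub_one_le_spectralRadius_of_isClique hG.isClique (by lia)
  have hρ_pos : 0 < ρ := spectralRadius_pos_of_isClique hG.isClique hT
  obtain ⟨v, -⟩ := card_pos.1 (zero_lt_one.trans hT)
  have : Nonempty V := ⟨v⟩
  obtain ⟨x, hx0, hx_nonneg, hx⟩ :=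
    exists_nonneg_adjMatrix_mulVec_eq_spectralRadius_smul (joinSplitGraph A T F)
  obtain ⟨m, M, hm, hmM, hbounds, hgap⟩ := hG.exists_bounds_of_nonneg hx hρ_pos hx0 hx_nonneg
  refine ⟨x, m, M, hx_nonneg, hx, hm, hmM, hbounds, ?_⟩
  have sum_A_le : ∑ i ∈ A, x i ≤ #A * M := by
    simpa using sum_le_card_nsmul A x M fun i hi => (hbounds i (hA hi)).2
  have sum_F_le : ∑ p ∈ F, x p.1 ≤ #F * M := by
    simpa using sum_le_card_nsmul F (fun p => x p.1) M fun p hp => (hbounds _ (hFT p hp)).2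
  refine mul_sub_lt_of_mul_sub_le (r := ρ * (ρ + 1)) (c := #Tᶜ * #A + #F) (hm.trans_le hmM) hmM
    (by positivity) ?_ ?_
  · rw [hgap, sum_nbrSum_joinSplitGraph hA hF, add_mul, mul_assoc]
    gcongr
  · have hlarge_real : (2 * (#A + #F) * (#Tᶜ * #A + #F) : ℝ) < #T * (#T - 1) := by
      rw [← Nat.cast_pred (by lia)]
      exact_mod_cast hlarge
    nlinarith

lemma sum_sq_nbrSum_lt_of_nearly_constant {x : V → ℝ} {m M : ℝ} (hA : A ⊆ T)
    (hF : F ⊆ (T \ A) ×ˢ Tᶜ) (hU : U ⊆ T \ A) (hw : w ∈ Tᶜ) (hcard : #U = #F)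
    (hne : ∀ v ∈ Tᶜ, ∃ p ∈ F, p.2 ≠ v) (hx_nonneg : 0 ≤ x) (hm : 0 < m) (hmM : m ≤ M)
    (hbounds : ∀ v ∈ T, m ≤ x v ∧ x v ≤ M) (hclose : 2 * (#A + #F) * (M - m) < M) :
    ∑ v ∈ Tᶜ, nbrSum (joinSplitGraph A T F) T x v ^ 2 <
      ∑ v ∈ Tᶜ, nbrSum (joinSplitGraph A T (U ×ˢ {w})) T x v ^ 2 := by
  have hF_bounds : ∀ p ∈ F, x p.1 ≤ M := fun p hp => (hbounds _ (by grind)).2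
  have hUw : U ×ˢ {w} ⊆ (T \ A) ×ˢ Tᶜ := product_subset_product hU (singleton_subset_iff.2 hw)
  have card_F_pos : 1 ≤ (#F : ℝ) := by
    obtain ⟨p, hp, -⟩ := hne w hw
    exact_mod_cast card_pos.2 ⟨p, hp⟩
  have sum_A_le : ∑ i ∈ A, x i ≤ #A * M := by
    simpa using sum_le_card_nsmul A x M fun i hi => (hbounds i (hA hi)).2
  have sum_F_le : ∑ p ∈ F, x p.1 ≤ #F * M := by
    simpa using sum_le_card_nsmul F (fun p => x p.1) M hF_bounds
  have le_sum_U : #F * m ≤ ∑ i ∈ U, x i := by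
    rw [← hcard]
    simpa using card_nsmul_le_sum U x m fun i hi => (hbounds i (sdiff_subset (hU hi))).1
  have sum_sq_le := sum_sq_edgeSum_le (fun _ hp => (mem_product.1 (hF hp)).2) (hm.le.trans hmM)
    hx_nonneg hF_bounds hne
  have gain := two_mul_add_lt_two_mul_add_sq card_F_pos hm hmM
    (sum_nonneg fun i _ => hx_nonneg i) sum_A_le sum_F_le le_sum_U sum_sq_le hclose
  rw [sum_sq_nbrSum_joinSplitGraph hA hF, sum_sq_nbrSum_joinSplitGraph hA hUw,
    sum_sq_edgeSum_product_singleton hw, sum_product]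
  simp only [sum_singleton]
  linarith

theorem spectralRadius_joinSplitGraph_lt (hA : A ⊆ T) (hF : F ⊆ (T \ A) ×ˢ Tᶜ)
    (hU : U ⊆ T \ A) (hw : w ∈ Tᶜ) (hcard : #U = #F) (hne : ∀ v ∈ Tᶜ, ∃ p ∈ F, p.2 ≠ v)
    (hlarge : 2 * (#A + #F) * (#Tᶜ * #A + #F) < #T * (#T - 1)) :
    (joinSplitGraph A T F).spectralRadius < (joinSplitGraph A T (U ×ˢ {w})).spectralRadius := by
  obtain ⟨x, m, M, hx_nonneg, hx, hm, hmM, hbounds, hclose⟩ :=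
    exists_eigenvector_joinSplitGraph_nearly_constant hA hF hlarge
  have hG : IsSplitOn (joinSplitGraph A T F) T := isSplitOn_joinSplitGraph hA (by grind)
  have hH : IsSplitOn (joinSplitGraph A T (U ×ˢ {w})) T := isSplitOn_joinSplitGraph hA (by grind)
  have hρ := spectralRadius_pos_of_isClique hG.isClique (one_lt_of_lt_mul_pred hlarge)
  exact hG.spectralRadius_lt_of_sum_sq_nbrSum_lt hH hρ hx
    (sum_sq_nbrSum_lt_of_nearly_constant hA hF hU hw hcard hne hx_nonneg hm hmM hbounds hclose)

lemma nonempty_iso_joinSplitGraph_product_singleton (hA : A ⊆ T) (hU : U ⊆ T \ A)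
    (hU' : U' ⊆ T \ A) (hcard : #U = #U') (hw : w ∈ Tᶜ) (hw' : w' ∈ Tᶜ) :
    Nonempty (joinSplitGraph A T (U ×ˢ {w}) ≃g joinSplitGraph A T (U' ×ˢ {w'})) := by
  rw [mem_compl] at hw hw'
  obtain ⟨σ, hσ, hσU⟩ := exists_perm_mem_iff hU hU' hcard
  have swap_of_mem : ∀ v ∈ T, Equiv.swap w w' v = v := fun v hv =>
    Equiv.swap_apply_of_ne_of_ne (ne_of_mem_of_not_mem hv hw) (ne_of_mem_of_not_mem hv hw')
  have swap_mem_iff : ∀ S ⊆ T, ∀ v, Equiv.swap w w' v ∈ S ↔ v ∈ S := by grind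
  have σ_mem_iff : ∀ v, σ v ∈ T \ A ↔ v ∈ T \ A := by grind [σ.injective]
  let e : Equiv.Perm V := σ.trans (Equiv.swap w w')
  have he_A : ∀ v, e v ∈ A ↔ v ∈ A := fun v => (swap_mem_iff A hA (σ v)).trans (by grind)
  have he_T : ∀ v, e v ∈ T ↔ v ∈ T := fun v =>
    (swap_mem_iff T Subset.rfl (σ v)).trans (by grind)
  have he_U : ∀ v, e v ∈ U' ↔ v ∈ U := fun v =>
    (swap_mem_iff U' (hU'.trans sdiff_subset) (σ v)).trans (hσU v)
  have he_w : ∀ v, e v = w' ↔ v = w := fun v => by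
    have he : e w = w' := by simp [e, hσ w (by simp [hw])]
    rw [← he, e.injective.eq_iff]
  refine ⟨e, fun {i j} => ?_⟩
  simp only [joinSplitGraph_adj, mem_product, mem_singleton, he_A, he_T, he_U, he_w, ne_eq,
    e.injective.eq_iff]

theorem spectralRadius_joinSplitGraph_le_and_eq_iff (hA : A ⊆ T) (hF : F ⊆ (T \ A) ×ˢ Tᶜ)
    (hU : U ⊆ T \ A) (hw : w ∈ Tᶜ) (hcard : #U = #F)
    (hlarge : 2 * (#A + #F) * (#Tᶜ * #A + #F) < #T * (#T - 1)) :
    (joinSplitGraph A T F).spectralRadius ≤ (joinSplitGraph A T (U ×ˢ {w})).spectralRadius ∧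
      ((joinSplitGraph A T F).spectralRadius = (joinSplitGraph A T (U ×ˢ {w})).spectralRadius ↔
        Nonempty (joinSplitGraph A T F ≃g joinSplitGraph A T (U ×ˢ {w}))) := by
  have eq_of_iso := fun e : Nonempty (joinSplitGraph A T F ≃g joinSplitGraph A T (U ×ˢ {w})) =>
    spectralRadius_congr e.some
  by_cases hstar : ∃ v ∈ Tᶜ, ∀ p ∈ F, p.2 = v
  · obtain ⟨v, hv, hFv⟩ := hstar
    have hiso : Nonempty (joinSplitGraph A T F ≃g joinSplitGraph A T (U ×ˢ {w})) := by
      rw [eq_image_fst_product_singleton_of_forall_snd_eq hFv]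
      exact nonempty_iso_joinSplitGraph_product_singleton hA (by grind) hU
        ((card_image_fst_of_forall_snd_eq hFv).trans hcard.symm) hv hw
    exact ⟨(eq_of_iso hiso).le, iff_of_true (eq_of_iso hiso) hiso⟩
  · push Not at hstar
    have hlt := spectralRadius_joinSplitGraph_lt hA hF hU hw hcard hstar hlarge
    exact ⟨hlt.le, iff_of_false hlt.ne fun e => hlt.ne (eq_of_iso e)⟩

end Extremality

section Fin

/-- The first `m` vertices of `Fin n`: with `m = a` the part `K_a` of `baseGraph n a b`, with
`m = n - b - 1` its clique part `K_a ∨ K_{n-a-b-1}`. -/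
def initialVertices (n m : ℕ) : Finset (Fin n) := {i | (i : ℕ) < m}

variable {n a b m : ℕ}

lemma mem_initialVertices {i : Fin n} : i ∈ initialVertices n m ↔ (i : ℕ) < m := by
  simp [initialVertices]

lemma initialVertices_mono {m' : ℕ} (h : m ≤ m') : initialVertices n m ⊆ initialVertices n m' :=
  fun _ hi => mem_initialVertices.2 ((mem_initialVertices.1 hi).trans_le h)

lemma card_initialVertices (h : m ≤ n) : #(initialVertices n m) = m := by
  rw [initialVertices, Fin.card_filter_val_lt, min_eq_right h]

lemma baseGraph_sup_fromEdgeSet_eq_joinSplitGraph (F : Finset (Fin n × Fin n)) :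
    baseGraph n a b ⊔ fromEdgeSet ((fun p : Fin n × Fin n => s(p.1, p.2)) '' F) =
      joinSplitGraph (initialVertices n a) (initialVertices n (n - b - 1)) F := by
  ext i j
  simp only [baseGraph, sup_adj, fromRel_adj, fromEdgeSet_adj, joinSplitGraph_adj,
    mem_initialVertices, Set.mem_image, SetLike.mem_coe, Prod.exists, Sym2.eq_iff]
  grind

lemma Hgraph_eq_joinSplitGraph (h : n - b - 1 < n) :
    Hgraph n a b = joinSplitGraph (initialVertices n a) (initialVertices n (n - b - 1))
      ((initialVertices n (2 * a - 1) \ initialVertices n a) ×ˢ {⟨n - b - 1, h⟩}) := by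
  ext i j
  simp only [Hgraph, fromRel_adj, joinSplitGraph_adj, mem_initialVertices, mem_product, mem_sdiff,
    mem_singleton, Fin.ext_iff]
  grind

lemma two_mul_add_one_le_of_lt_mul_pred {k t : ℕ}
    (h : 2 * (k + 1 + k) * ((b + 1) * (k + 1) + k) < t * (t - 1)) : 2 * k + 1 ≤ t := by
  by_contra! ht
  refine h.not_ge (Nat.mul_le_mul (by lia) ?_)
  nlinarith [Nat.sub_le t 1]

lemma lt_mul_pred_of_two_mul_le (hn : 2 * (a + b + 2) * (b + 2) ≤ n) :
    2 * (2 * a - 1) * ((b + 2) * a - 1) < (n - b - 1) * (n - b - 2) := by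
  obtain ⟨t, rfl⟩ : ∃ t, n = t + b + 2 := ⟨n - b - 2, by
    have : b + 2 ≤ n := by nlinarith
    lia⟩
  rw [show t + b + 2 - b - 1 = t + 1 by lia, show t + b + 2 - b - 2 = t by lia, mul_comm (t + 1)]
  have ht : (b + 2) * (2 * a + 2 * b + 3) ≤ t := by linarith
  have h₁ : 2 * (2 * a - 1) ≤ t := by
    have : 2 * (2 * a) ≤ (b + 2) * (2 * a + 2 * b + 3) := Nat.mul_le_mul (by lia) (by lia)
    have := this.trans ht
    lia
  have h₂ : (b + 2) * a - 1 < t + 1 := by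
    have : (b + 2) * a ≤ (b + 2) * (2 * a + 2 * b + 3) := Nat.mul_le_mul_left _ (by lia)
    have := this.trans ht
    lia
  exact Nat.mul_lt_mul_of_le_of_lt h₁ h₂ (by nlinarith)

end Fin

theorem GFamily_spectralRadius_le_Hgraph_general {a b n : ℕ} (ha : 0 < a)
    (hn : 2 * (2 * a - 1) * ((b + 2) * a - 1) < (n - b - 1) * (n - b - 2))
    {G : SimpleGraph (Fin n)} (hG : GFamily n a b G) :
    G.spectralRadius ≤ (Hgraph n a b).spectralRadius ∧
      (G.spectralRadius = (Hgraph n a b).spectralRadius ↔ Nonempty (G ≃g Hgraph n a b)) := by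
  obtain ⟨k, rfl⟩ := Nat.exists_eq_add_one.2 ha
  obtain ⟨F, hF_card, hF, rfl⟩ := hG
  replace hn : 2 * (k + 1 + k) * ((b + 1) * (k + 1) + k) < (n - b - 1) * (n - b - 1 - 1) := by
    convert hn using 2 <;> lia
  have hT : 1 < n - b - 1 := one_lt_of_lt_mul_pred hn
  have hk : 2 * k + 1 ≤ n - b - 1 := two_mul_add_one_le_of_lt_mul_pred hn
  have hU_card : #(initialVertices n (2 * (k + 1) - 1) \ initialVertices n (k + 1)) = #F := by
    rw [card_sdiff_of_subset (initialVertices_mono (by lia)), card_initialVertices (by lia),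
      card_initialVertices (by lia)]
    lia
  rw [baseGraph_sup_fromEdgeSet_eq_joinSplitGraph, Hgraph_eq_joinSplitGraph (by lia)]
  refine spectralRadius_joinSplitGraph_le_and_eq_iff (initialVertices_mono (by lia)) ?_
    (sdiff_subset_sdiff (initialVertices_mono hk) Subset.rfl) ?_ hU_card ?_
  · intro p hp
    have := hF p hp
    simp only [mem_product, mem_sdiff, mem_compl, mem_initialVertices]
    lia
  · simp [mem_initialVertices]
  · rwa [card_compl, Fintype.card_fin, card_initialVertices (by lia), card_initialVertices (by lia),
      hF_card, add_tsub_cancel_right, show n - (n - b - 1) = b + 1 by lia]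

/-- **Lemma (maximality of `H_n^{a,b}` in `𝒢_n^{a,b}`).** -/
theorem GFamily_spectralRadius_le_Hgraph (a b n : ℕ) (ha : 0 < a) (hab : a < b)
    (hn : 2 * (a + b + 2) * (b + 2) ≤ n)
    (G : SimpleGraph (Fin n)) (hG : GFamily n a b G) :
    G.spectralRadius ≤ (Hgraph n a b).spectralRadius ∧
      (G.spectralRadius = (Hgraph n a b).spectralRadius ↔ Nonempty (G ≃g Hgraph n a b)) :=
  GFamily_spectralRadius_le_Hgraph_general ha (lt_mul_pred_of_two_mul_le hn) hG
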